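/- arXiv:2306.04792 — 2 statements merged into one kernel-verified Lean document; each statement's English description precedes it below -/
import Mathlib

section
/- In the randomized controlled trial model with responses, for every attribute a : N → {0,1} with 0 < |a| and every position k ∈ {1,…,s}: Pr(R_k = 1 | A_k = 1) = (t/s)·(1/|a|)·Σ_{i : a(i)=1} τ_i + (1 − t/s)·(1/|a|)·Σ_{i : a(i)=1} ν_i, where A_k = a(i_k) and |a| = #{i : a(i)=1}. -/
/- Randomized controlled trial model with responses:
   a uniformly random injective s-tuple of individuals from `Fin n`
   (encoded as `Fin s ↪ Fin n`), an independent uniformly random t-element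
   subset of positions `Fin s` (the treated positions), and, given these,
   independent Bernoulli responses at each position: position `k` responds
   with probability `τ (i_k)` if treated and `ν (i_k)` if untreated. -/

open Finset BigOperators
open scoped Classical

namespace RCT

/-- Probability weight of a sample point `(σ, T, R)`. -/
noncomputable def w (n s t : ℕ) (τ ν : Fin n → ℝ)
    (ω : (Fin s ↪ Fin n) × Finset (Fin s) × (Fin s → Bool)) : ℝ :=
  ((Fintype.card (Fin s ↪ Fin n) : ℝ))⁻¹ *
    (if ω.2.1.card = t then ((s.choose t : ℝ))⁻¹ else 0) *
    ∏ k : Fin s,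
      (if ω.2.2 k = true
        then (if k ∈ ω.2.1 then τ (ω.1 k) else ν (ω.1 k))
        else 1 - (if k ∈ ω.2.1 then τ (ω.1 k) else ν (ω.1 k)))

/-- Probability of an event. -/
noncomputable def Pr (n s t : ℕ) (τ ν : Fin n → ℝ)
    (E : (Fin s ↪ Fin n) × Finset (Fin s) × (Fin s → Bool) → Prop) : ℝ :=
  ∑ ω : (Fin s ↪ Fin n) × Finset (Fin s) × (Fin s → Bool),
    if E ω then w n s t τ ν ω else 0

/-- Conditional probability `Pr (E | F)`. -/
noncomputable def cPr (n s t : ℕ) (τ ν : Fin n → ℝ)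
    (E F : (Fin s ↪ Fin n) × Finset (Fin s) × (Fin s → Bool) → Prop) : ℝ :=
  Pr n s t τ ν (fun ω => E ω ∧ F ω) / Pr n s t τ ν F

/-- Expectation of a real-valued random variable. -/
noncomputable def Ex (n s t : ℕ) (τ ν : Fin n → ℝ)
    (f : (Fin s ↪ Fin n) × Finset (Fin s) × (Fin s → Bool) → ℝ) : ℝ :=
  ∑ ω : (Fin s ↪ Fin n) × Finset (Fin s) × (Fin s → Bool), w n s t τ ν ω * f ω

theorem aux_bern {s : ℕ} (p : Fin s → ℝ) :
    ∑ R : Fin s → Bool, ∏ j, (if R j = true then p j else 1 - p j) = 1 := by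
  have h := Finset.prod_univ_sum (fun _ : Fin s => (Finset.univ : Finset Bool))
    (fun j b => if b = true then p j else 1 - p j)
  rw [Fintype.piFinset_univ] at h
  rw [← h]
  simp

theorem aux_bern2 {s : ℕ} (p : Fin s → ℝ) (k : Fin s) :
    ∑ R : Fin s → Bool, (if R k = true then
      ∏ j, (if R j = true then p j else 1 - p j) else 0) = p k := by
  have h := Finset.prod_univ_sum (fun _ : Fin s => (Finset.univ : Finset Bool))
    (fun j b => if b = true then p j else (if j = k then 0 else 1 - p j))
  rw [Fintype.piFinset_univ] at h
  have h2 : ∏ j : Fin s, ∑ b : Bool,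
      (if b = true then p j else (if j = k then 0 else 1 - p j)) = p k := by
    rw [Finset.prod_eq_single k]
    · simp
    · intro j _ hj
      simp [hj]
    · simp
  rw [← h2, h]
  refine Finset.sum_congr rfl fun R _ => ?_
  by_cases hk : R k = true
  · rw [if_pos hk]
    refine Finset.prod_congr rfl fun j _ => ?_
    by_cases hj : j = k
    · subst hj; simp [hk]
    · simp [hj]
  · rw [if_neg hk]
    symm
    apply Finset.prod_eq_zero (Finset.mem_univ k)
    simp [hk]

theorem aux_emb {n s : ℕ} (hsn : s ≤ n) (k : Fin s) :
    ∃ c : ℝ, 0 < c ∧ ∀ g : Fin n → ℝ, ∑ σ : Fin s ↪ Fin n, g (σ k) = c * ∑ i, g i := by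
  have hc : ∀ i j : Fin n, (univ.filter (fun σ : Fin s ↪ Fin n => σ k = i)).card ≤
      (univ.filter (fun σ : Fin s ↪ Fin n => σ k = j)).card := by
    intro i j
    apply Finset.card_le_card_of_injOn (fun σ => σ.trans (Equiv.swap i j).toEmbedding)
    · intro σ hσ
      simp only [Finset.coe_filter, Finset.mem_univ, true_and, Set.mem_ofPred_eq] at hσ ⊢
      simp [hσ]
    · intro σ _ σ' _ h
      ext x
      have := DFunLike.congr_fun h x
      simp at this
      rw [this]
  let σ0 : Fin s ↪ Fin n := (Fin.castLEEmb hsn)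
  refine ⟨(univ.filter (fun σ : Fin s ↪ Fin n => σ k = σ0 k)).card, ?_, ?_⟩
  · exact_mod_cast Finset.card_pos.mpr ⟨σ0, by simp⟩
  · intro g
    rw [← Finset.sum_fiberwise (s := univ) (fun σ : Fin s ↪ Fin n => σ k) (fun σ => g (σ k)),
      Finset.mul_sum]
    refine Finset.sum_congr rfl fun i _ => ?_
    rw [le_antisymm (hc (σ0 k) i) (hc i (σ0 k)), ← nsmul_eq_mul, ← Finset.sum_const]
    refine Finset.sum_congr rfl fun σ hσ => ?_
    rw [(Finset.mem_filter.mp hσ).2]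

theorem aux_sub {s t : ℕ} (hts : t < s) (k : Fin s) (x y : ℝ) :
    ∑ T : Finset (Fin s), (if T.card = t then ((s.choose t : ℝ))⁻¹ else 0) *
      (if k ∈ T then x else y) = (t : ℝ) / s * x + (1 - (t : ℝ) / s) * y := by
  have hC : (s.choose t : ℝ) ≠ 0 := by exact_mod_cast (Nat.choose_pos hts.le).ne'
  have hs : (s : ℝ) ≠ 0 := by
    have : s ≠ 0 := by omega
    exact_mod_cast this
  have h1 : ∑ T : Finset (Fin s), (if T.card = t then (1:ℝ) else 0) = s.choose t := by
    rw [Finset.sum_boole, Finset.univ_filter_card_eq]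
    simp
  have h2 : ∑ T : Finset (Fin s), (if T.card = t then (1:ℝ) else 0) *
      (if k ∈ T then 0 else 1) = (s-1).choose t := by
    have : ∀ T : Finset (Fin s), (if T.card = t then (1:ℝ) else 0) *
      (if k ∈ T then 0 else 1) = if T ∈ Finset.powersetCard t (univ.erase k) then 1 else 0 := by
      intro T
      have : T ∈ Finset.powersetCard t (univ.erase k) ↔ k ∉ T ∧ T.card = t := by
        rw [Finset.mem_powersetCard, Finset.subset_erase]
        simp
      rw [if_congr this rfl rfl]
      by_cases h1 : T.card = t <;> by_cases h2 : k ∈ T <;> simp [h1, h2]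
    rw [Finset.sum_congr rfl fun T _ => this T, Finset.sum_boole, Finset.filter_univ_mem,
      Finset.card_powersetCard, Finset.card_erase_of_mem (Finset.mem_univ k)]
    simp
  have h3 : ((s-1).choose t : ℝ) * s = s.choose t * (s - t) := by
    obtain ⟨m, rfl⟩ : ∃ m, s = m + 1 := ⟨s - 1, by omega⟩
    have := Nat.choose_mul_succ_eq m t
    rw [Nat.add_sub_cancel, ← Nat.cast_sub hts.le]
    exact_mod_cast this
  have h4 : ∀ T : Finset (Fin s), (if T.card = t then ((s.choose t : ℝ))⁻¹ else 0) *
      (if k ∈ T then x else y) = (s.choose t : ℝ)⁻¹ * x * (if T.card = t then (1:ℝ) else 0)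
       + (s.choose t : ℝ)⁻¹ * (y - x) * ((if T.card = t then (1:ℝ) else 0) *
      (if k ∈ T then 0 else 1)) := by
    intro T
    split_ifs <;> ring
  rw [Finset.sum_congr rfl fun T _ => h4 T, Finset.sum_add_distrib, ← Finset.mul_sum,
    ← Finset.mul_sum, h1, h2]
  have h5 : ((s-1).choose t : ℝ) = s.choose t * (s - t) / s := by
    rw [← h3]; field_simp
  rw [h5]
  field_simp
  ring

/-- `Pr(R_k = 1 | A_k = 1) = (t/s)·(1/|a|)·Σ_{i : a i = 1} τ i
      + (1 − t/s)·(1/|a|)·Σ_{i : a i = 1} ν i`. -/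
theorem response_given_attribute_one (n s t : ℕ) (ht : 0 < t) (hts : t < s) (hsn : s ≤ n)
    (τ ν : Fin n → ℝ) (hτ : ∀ i, τ i ∈ Set.Icc (0 : ℝ) 1) (hν : ∀ i, ν i ∈ Set.Icc (0 : ℝ) 1)
    (a : Fin n → Fin 2) (ha : 0 < (univ.filter (fun i => a i = 1)).card) (k : Fin s) :
    cPr n s t τ ν (fun ω => ω.2.2 k = true) (fun ω => a (ω.1 k) = 1) =
      ((t : ℝ) / s) * ((1 / ((univ.filter (fun i => a i = 1)).card : ℝ)) *
          ∑ i ∈ univ.filter (fun i => a i = 1), τ i) +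
        (1 - (t : ℝ) / s) * ((1 / ((univ.filter (fun i => a i = 1)).card : ℝ)) *
          ∑ i ∈ univ.filter (fun i => a i = 1), ν i) := by
  obtain ⟨c, hc, hemb⟩ := aux_emb hsn k
  have hK : (Fintype.card (Fin s ↪ Fin n) : ℝ) ≠ 0 := by
    have : 0 < Fintype.card (Fin s ↪ Fin n) := Fintype.card_pos_iff.mpr ⟨Fin.castLEEmb hsn⟩
    exact_mod_cast this.ne'
  have hA : ((univ.filter (fun i => a i = 1)).card : ℝ) ≠ 0 := by exact_mod_cast ha.ne'
  have hD : Pr n s t τ ν (fun ω => a (ω.1 k) = 1) =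
      (Fintype.card (Fin s ↪ Fin n) : ℝ)⁻¹ * (c * (univ.filter (fun i => a i = 1)).card) := by
    have h := hemb (fun i => if a i = 1 then 1 else 0)
    rw [Finset.sum_boole (fun i => a i = 1)] at h
    rw [← h, Finset.mul_sum]
    unfold Pr
    rw [Fintype.sum_prod_type]
    refine Finset.sum_congr rfl fun σ _ => ?_
    rw [Fintype.sum_prod_type]
    by_cases hσ : a (σ k) = 1
    · simp only [hσ, if_true, w]
      have hs := aux_sub hts k 1 1
      simp only [ite_self, mul_one] at hs
      refine (Finset.sum_congr rfl fun T _ => ?_).trans (b := ∑ T : Finset (Fin s), (Fintype.card (Fin s ↪ Fin n) : ℝ)⁻¹ * (if T.card = t then ((s.choose t : ℝ))⁻¹ else 0)) ?_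
      · conv_rhs => rw [← mul_one (_ * _),
          ← aux_bern (fun j => if j ∈ T then τ (σ j) else ν (σ j)), Finset.mul_sum]
      · rw [← Finset.mul_sum, hs]; ring
    · simp [hσ]
  have hN : Pr n s t τ ν (fun ω => ω.2.2 k = true ∧ a (ω.1 k) = 1) =
      (Fintype.card (Fin s ↪ Fin n) : ℝ)⁻¹ * (c * ((t : ℝ) / s *
        (∑ i ∈ univ.filter (fun i => a i = 1), τ i) + (1 - (t : ℝ) / s) *
        ∑ i ∈ univ.filter (fun i => a i = 1), ν i)) := by
    have h := hemb (fun i => if a i = 1 then (t : ℝ) / s * τ i + (1 - (t : ℝ) / s) * ν i else 0)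
    have h' : (∑ i, if a i = 1 then (t : ℝ) / s * τ i + (1 - (t : ℝ) / s) * ν i else 0) =
        (t : ℝ) / s * (∑ i ∈ univ.filter (fun i => a i = 1), τ i) + (1 - (t : ℝ) / s) *
        ∑ i ∈ univ.filter (fun i => a i = 1), ν i := by
      rw [← Finset.sum_filter, Finset.sum_add_distrib, ← Finset.mul_sum, ← Finset.mul_sum]
    rw [h'] at h
    rw [← h, Finset.mul_sum]
    unfold Pr
    rw [Fintype.sum_prod_type]
    refine Finset.sum_congr rfl fun σ _ => ?_
    rw [Fintype.sum_prod_type]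
    by_cases hσ : a (σ k) = 1
    · simp only [hσ, if_true, w, and_true]
      rw [← aux_sub hts k, Finset.mul_sum]
      refine Finset.sum_congr rfl fun T _ => ?_
      rw [← aux_bern2 (fun j => if j ∈ T then τ (σ j) else ν (σ j)) k, ← mul_assoc,
        Finset.mul_sum]
      refine Finset.sum_congr rfl fun R _ => ?_
      by_cases hR : R k = true
      · rw [if_pos hR, if_pos hR]
      · rw [if_neg hR, if_neg hR, mul_zero]
    · simp [hσ]
  unfold cPr
  rw [hN, hD]
  have hs : (s : ℝ) ≠ 0 := by
    have : s ≠ 0 := by omega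
    exact_mod_cast this
  field_simp

end RCT
end

section
/- In the randomized controlled trial model with responses, for every attribute a : N → {0,1} with |a| < n and every position k ∈ {1,…,s}, the conditional effect of treatment given A_k = 0 satisfies: Pr(R_k = 1 | (T_k = 1) ∩ (A_k = 0)) − Pr(R_k = 1 | (T_k = 0) ∩ (A_k = 0)) = (1/(n−|a|))·Σ_{i : a(i)=0} (τ_i − ν_i), where A_k = a(i_k) and |a| = #{i : a(i)=1}. -/
/- Randomized controlled trial model with responses:
   a uniformly random injective s-tuple of individuals from `Fin n`
   (encoded as `Fin s ↪ Fin n`), an independent uniformly random t-element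
   subset of positions `Fin s` (the treated positions), and, given these,
   independent Bernoulli responses at each position: position `k` responds
   with probability `τ (i_k)` if treated and `ν (i_k)` if untreated. -/

open Finset BigOperators
open scoped Classical

namespace RCT

theorem sumR {s : ℕ} (q : Fin s → ℝ) :
    ∑ R : Fin s → Bool, ∏ j, (if R j = true then q j else 1 - q j) = 1 := by
  have h := Finset.prod_univ_sum (fun _ : Fin s => (univ : Finset Bool))
    (fun j b => if b = true then q j else 1 - q j)
  rw [Fintype.piFinset_univ] at h
  rw [← h]
  simp

theorem sumRk {s : ℕ} (q : Fin s → ℝ) (k : Fin s) :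
    ∑ R : Fin s → Bool, (if R k = true then
      ∏ j, (if R j = true then q j else 1 - q j) else 0) = q k := by
  have h := Finset.prod_univ_sum (fun _ : Fin s => (univ : Finset Bool))
    (fun j b => if b = true then q j else if j = k then 0 else 1 - q j)
  rw [Fintype.piFinset_univ] at h
  have h2 : ∏ j, ∑ b : Bool, (if b = true then q j else if j = k then 0 else 1 - q j) = q k := by
    rw [Finset.prod_eq_single k]
    · simp
    · intro j _ hj
      simp [hj]
    · simp
  rw [← h2, h]
  refine Finset.sum_congr rfl fun R _ => ?_
  split_ifs with hR
  · refine Finset.prod_congr rfl fun j _ => ?_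
    by_cases hj : j = k
    · subst hj; simp [hR]
    · simp [hj]
  · symm
    apply Finset.prod_eq_zero (mem_univ k)
    simp [hR]

theorem sumEmb {n s : ℕ} (hsn : s ≤ n) (k : Fin s) :
    ∃ C : ℝ, C ≠ 0 ∧ ∀ g : Fin n → ℝ, ∑ σ : Fin s ↪ Fin n, g (σ k) = C * ∑ i, g i := by
  have hs : 0 < s := k.pos
  let i0 : Fin n := ⟨0, by omega⟩
  let c : Fin n → ℝ := fun i => ((univ.filter (fun σ : Fin s ↪ Fin n => σ k = i)).card : ℝ)
  have hc : ∀ i, c i = c i0 := by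
    intro i
    simp only [c]
    congr 1
    apply Finset.card_bij' (fun σ _ => σ.trans (Equiv.swap i i0).toEmbedding)
      (fun σ _ => σ.trans (Equiv.swap i i0).toEmbedding)
    · intro σ _; ext; simp
    · intro σ _; ext; simp
    · intro σ h
      have h := (Finset.mem_filter.1 h).2
      exact Finset.mem_filter.2 ⟨mem_univ _, by simp [h]⟩
    · intro σ h
      have h := (Finset.mem_filter.1 h).2
      exact Finset.mem_filter.2 ⟨mem_univ _, by simp [h]⟩
  have hg : ∀ g : Fin n → ℝ, ∑ σ : Fin s ↪ Fin n, g (σ k) = c i0 * ∑ i, g i := by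
    intro g
    rw [← Finset.sum_fiberwise (s := univ) (g := fun σ : Fin s ↪ Fin n => σ k), Finset.mul_sum]
    refine Finset.sum_congr rfl fun i _ => ?_
    rw [← hc i, Finset.sum_congr rfl (g := fun _ => g i)]
    · simp [c]
    · intro σ h; simp at h; rw [h]
  refine ⟨c i0, ?_, hg⟩
  intro h0
  have := hg (fun _ => 1)
  rw [h0] at this
  have he : Nonempty (Fin s ↪ Fin n) := ⟨Fin.castLEEmb hsn⟩
  simp at this
  omega

theorem Pr_F (n s t : ℕ) (τ ν : Fin n → ℝ) (k : Fin s) (C : ℝ)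
    (hC : ∀ g : Fin n → ℝ, ∑ σ : Fin s ↪ Fin n, g (σ k) = C * ∑ i, g i)
    (P : Finset (Fin s) → Prop) (Q : Fin n → Prop) [DecidablePred Q] :
    Pr n s t τ ν (fun ω => P ω.2.1 ∧ Q (ω.1 k)) =
      ((Fintype.card (Fin s ↪ Fin n) : ℝ))⁻¹ *
      (∑ T : Finset (Fin s), if P T then
        (if T.card = t then ((s.choose t : ℝ))⁻¹ else 0) else 0) *
      (C * ∑ i, if Q i then 1 else 0) := by
  rw [← hC (fun i => if Q i then 1 else 0)]
  unfold Pr w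
  simp only [Fintype.sum_prod_type]
  rw [Finset.mul_sum]
  refine Finset.sum_congr rfl fun σ _ => ?_
  rw [Finset.mul_sum, Finset.sum_mul]
  refine Finset.sum_congr rfl fun T _ => ?_
  by_cases hP : P T <;> by_cases hQ : Q (σ k) <;> simp only [hP, hQ, and_true, and_false,
    true_and, if_true, if_false, Finset.sum_const_zero, mul_zero, zero_mul]
  refine Eq.trans ?_ (congrArg _ (sumR (fun j => if j ∈ T then τ (σ j) else ν (σ j))))
  rw [Finset.mul_sum]

theorem Pr_RF (n s t : ℕ) (τ ν : Fin n → ℝ) (k : Fin s) (C : ℝ)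
    (hC : ∀ g : Fin n → ℝ, ∑ σ : Fin s ↪ Fin n, g (σ k) = C * ∑ i, g i)
    (P : Finset (Fin s) → Prop) (Q : Fin n → Prop) [DecidablePred Q] (f : Fin n → ℝ)
    (hf : ∀ T, P T → ∀ i, (if k ∈ T then τ i else ν i) = f i) :
    Pr n s t τ ν (fun ω => ω.2.2 k = true ∧ (P ω.2.1 ∧ Q (ω.1 k))) =
      ((Fintype.card (Fin s ↪ Fin n) : ℝ))⁻¹ *
      (∑ T : Finset (Fin s), if P T then
        (if T.card = t then ((s.choose t : ℝ))⁻¹ else 0) else 0) *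
      (C * ∑ i, if Q i then f i else 0) := by
  rw [← hC (fun i => if Q i then f i else 0)]
  unfold Pr w
  simp only [Fintype.sum_prod_type]
  rw [Finset.mul_sum]
  refine Finset.sum_congr rfl fun σ _ => ?_
  rw [Finset.mul_sum, Finset.sum_mul]
  refine Finset.sum_congr rfl fun T _ => ?_
  by_cases hP : P T <;> by_cases hQ : Q (σ k) <;> simp only [hP, hQ, and_true, and_false,
    true_and, if_true, if_false, Finset.sum_const_zero, mul_zero, zero_mul]
  rw [← hf T hP, ← sumRk (fun j => if j ∈ T then τ (σ j) else ν (σ j)) k, Finset.mul_sum]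
  refine Finset.sum_congr rfl fun R _ => ?_
  by_cases hR : R k = true
  · rw [if_pos hR, if_pos hR]
  · rw [if_neg hR, if_neg hR, mul_zero]

theorem cPr_eq (n s t : ℕ) (hts : t < s) (hsn : s ≤ n) (τ ν : Fin n → ℝ) (k : Fin s)
    (P : Finset (Fin s) → Prop) (Q : Fin n → Prop) [DecidablePred Q] (f : Fin n → ℝ)
    (hf : ∀ T, P T → ∀ i, (if k ∈ T then τ i else ν i) = f i)
    (hT : ∃ T, P T ∧ T.card = t) :
    cPr n s t τ ν (fun ω => ω.2.2 k = true) (fun ω => P ω.2.1 ∧ Q (ω.1 k)) =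
      (∑ i, if Q i then f i else 0) / (∑ i, if Q i then 1 else 0) := by
  obtain ⟨C, hC0, hC⟩ := sumEmb hsn k
  unfold cPr
  rw [Pr_RF n s t τ ν k C hC P Q f hf, Pr_F n s t τ ν k C hC P Q, ← mul_assoc, ← mul_assoc]
  apply mul_div_mul_left
  refine mul_ne_zero (mul_ne_zero (inv_ne_zero ?_) ?_) hC0
  · have he : Nonempty (Fin s ↪ Fin n) := ⟨Fin.castLEEmb hsn⟩
    exact_mod_cast Fintype.card_ne_zero
  · obtain ⟨T, hP, hc⟩ := hT
    have hpos : (0 : ℝ) < ((s.choose t : ℝ))⁻¹ := by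
      have := Nat.choose_pos hts.le
      positivity
    apply ne_of_gt
    apply Finset.sum_pos'
    · intro T _
      split_ifs <;> first | exact hpos.le | exact le_rfl
    · exact ⟨T, mem_univ _, by rw [if_pos hP, if_pos hc]; exact hpos⟩

/-- Conditional effect of treatment given `A_k = 0`:
`Pr(R_k = 1 | (T_k = 1) ∩ (A_k = 0)) − Pr(R_k = 1 | (T_k = 0) ∩ (A_k = 0))
  = (1/(n−|a|))·Σ_{i : a i = 0} (τ i − ν i)`. -/
theorem conditional_effect_attribute_zero (n s t : ℕ) (ht : 0 < t) (hts : t < s) (hsn : s ≤ n)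
    (τ ν : Fin n → ℝ) (hτ : ∀ i, τ i ∈ Set.Icc (0 : ℝ) 1) (hν : ∀ i, ν i ∈ Set.Icc (0 : ℝ) 1)
    (a : Fin n → Fin 2) (ha : (univ.filter (fun i => a i = 1)).card < n) (k : Fin s) :
    cPr n s t τ ν (fun ω => ω.2.2 k = true) (fun ω => k ∈ ω.2.1 ∧ a (ω.1 k) = 0) -
      cPr n s t τ ν (fun ω => ω.2.2 k = true) (fun ω => k ∉ ω.2.1 ∧ a (ω.1 k) = 0) =
      (1 / ((n : ℝ) - ((univ.filter (fun i => a i = 1)).card : ℝ))) *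
        ∑ i ∈ univ.filter (fun i => a i = 0), (τ i - ν i) := by
  have h1 : ∃ T : Finset (Fin s), k ∈ T ∧ T.card = t := by
    obtain ⟨T, h, _, hc⟩ := Finset.exists_subsuperset_card_eq (s := {k}) (t := univ)
      (Finset.subset_univ _) (n := t) (by simp; omega) (by simp; omega)
    exact ⟨T, h (by simp), hc⟩
  have h2 : ∃ T : Finset (Fin s), k ∉ T ∧ T.card = t := by
    obtain ⟨T, h, hc⟩ := Finset.exists_subset_card_eq (s := univ.erase k) (n := t)
      (by rw [Finset.card_erase_of_mem (mem_univ _)]; simp; omega)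
    exact ⟨T, fun hk => by simpa using h hk, hc⟩
  rw [cPr_eq n s t hts hsn τ ν k (fun T => k ∈ T) (fun i => a i = 0) τ
      (fun T h i => if_pos h) h1,
    cPr_eq n s t hts hsn τ ν k (fun T => k ∉ T) (fun i => a i = 0) ν
      (fun T h i => if_neg h) h2]
  have hcard : (∑ i, if a i = 0 then (1 : ℝ) else 0) =
      (n : ℝ) - ((univ.filter (fun i => a i = 1)).card : ℝ) := by
    have h := Finset.card_filter_add_card_filter_not (s := (univ : Finset (Fin n)))
      (fun i => a i = 1)
    have h' : (univ.filter (fun i => ¬ a i = 1)) = univ.filter (fun i => a i = 0) := by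
      ext i
      simp only [mem_filter, mem_univ, true_and]
      omega
    rw [h', Finset.card_univ, Fintype.card_fin] at h
    rw [Finset.sum_boole, eq_sub_iff_add_eq, add_comm]
    exact_mod_cast h
  rw [hcard, ← sub_div, ← Finset.sum_filter, ← Finset.sum_filter, ← Finset.sum_sub_distrib]
  ring

end RCT
end
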